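/- Let a ≥ 1 and b, c ≥ 0 be integers and let n ≥ 1 be an integer with a + b + c ≥ n − 1. Then the underlying undirected graph of the finite quadratic Jaco graph J_n(f) with incidence function f(x) = a·x² + b·x + c is the complete graph K_n. -/

import Mathlib

/-- In-degree of vertex `v_j` in the (root) Jaco graph with incidence function `f`:
`d⁻(v_j) = |{ i : 1 ≤ i < j, i + f i − d⁻(v_i) ≥ j }|`. -/
noncomputable def jacoIn (f : ℕ → ℕ) (j : ℕ) : ℕ :=
  Nat.strongRecOn j (fun j ih =>
    (((Finset.Ico 1 j).attach).filter (fun i : {x // x ∈ Finset.Ico 1 j} =>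
      j ≤ i.1 + f i.1 - ih i.1 (Finset.mem_Ico.mp i.2).2)).card)

/-- The arc `(v_i, v_j)` is present in the Jaco graph iff `1 ≤ i < j` and
`i + f i − d⁻(v_i) ≥ j`. -/
def jacoArc (f : ℕ → ℕ) (i j : ℕ) : Prop :=
  1 ≤ i ∧ i < j ∧ j ≤ i + f i - jacoIn f i

noncomputable instance (f : ℕ → ℕ) (i j : ℕ) : Decidable (jacoArc f i j) := by
  unfold jacoArc; infer_instance

/-- The underlying undirected simple graph `J*_n(f)` of the finite Jaco graph `J_n(f)`,
on vertex set `{v_1, …, v_n}` (vertex `x : Fin n` represents `v_{x+1}`). -/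
def jacoGraph (f : ℕ → ℕ) (n : ℕ) : SimpleGraph (Fin n) :=
  SimpleGraph.fromRel (fun x y => jacoArc f (x.1 + 1) (y.1 + 1))

noncomputable instance (f : ℕ → ℕ) (n : ℕ) : DecidableRel (jacoGraph f n).Adj := fun x y =>
  decidable_of_iff
    (x ≠ y ∧ (jacoArc f (x.1 + 1) (y.1 + 1) ∨ jacoArc f (y.1 + 1) (x.1 + 1)))
    (by unfold jacoGraph; exact (SimpleGraph.fromRel_adj (fun a b : Fin n => jacoArc f (a.1 + 1) (b.1 + 1)) x y).symm)

/-!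
The in-degree of `v_i` counts a subset of the `i - 1` vertices preceding it, so the out-arcs of
`v_i` reach at least up to index `i + f i - (i - 1) = f i + 1`. Hence `v_i` is joined to all of
`v_{i+1}, …, v_n` as soon as `n - 1 ≤ f i`, and a quadratic with nonnegative coefficients satisfies
`f i ≥ f 1 = a + b + c` for every `i ≥ 1`.
-/

theorem jacoIn_eq_card_filter (f : ℕ → ℕ) (j : ℕ) :
    jacoIn f j = ((Finset.Ico 1 j).filter fun i => j ≤ i + f i - jacoIn f i).card := by
  rw [jacoIn, Nat.strongRecOn_eq]
  change ((Finset.Ico 1 j).attach.filter fun i => j ≤ i.1 + f i.1 - jacoIn f i.1).card = _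
  rw [Finset.filter_attach (fun i => j ≤ i + f i - jacoIn f i), Finset.card_map,
    Finset.card_attach]

theorem jacoIn_le (f : ℕ → ℕ) (j : ℕ) : jacoIn f j ≤ j - 1 :=
  calc
    jacoIn f j = ((Finset.Ico 1 j).filter fun i => j ≤ i + f i - jacoIn f i).card :=
      jacoIn_eq_card_filter f j
    _ ≤ (Finset.Ico 1 j).card := Finset.card_filter_le _ _
    _ = j - 1 := Nat.card_Ico 1 j

theorem jacoArc_of_le_add_one {f : ℕ → ℕ} {i j : ℕ} (hi : 1 ≤ i) (hij : i < j)
    (hj : j ≤ f i + 1) : jacoArc f i j := by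
  have hdeg : jacoIn f i ≤ i - 1 := jacoIn_le f i
  exact ⟨hi, hij, by omega⟩

theorem quadratic_jaco_graph_complete_general {f : ℕ → ℕ} {n : ℕ}
    (hf : ∀ i, 1 ≤ i → i < n → n - 1 ≤ f i) : jacoGraph f n = ⊤ := by
  have arc_of_lt {x y : Fin n} (hxy : x < y) : jacoArc f (x + 1) (y + 1) := by
    have hreach : n - 1 ≤ f (x + 1) := hf (x + 1) (by omega) (by omega)
    exact jacoArc_of_le_add_one (by omega) (by omega) (by omega)
  refine SimpleGraph.eq_top_iff_forall_ne_adj.mpr fun x y hne => ?_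
  exact (SimpleGraph.fromRel_adj _ x y).mpr ⟨hne, hne.lt_or_gt.imp arc_of_lt arc_of_lt⟩

theorem add_add_le_quadratic (a b c : ℕ) {x : ℕ} (hx : 1 ≤ x) :
    a + b + c ≤ a * x ^ 2 + b * x + c := by
  gcongr
  · exact Nat.le_mul_of_pos_right a (pow_pos hx 2)
  · exact Nat.le_mul_of_pos_right b hx

/-- If `a ≥ 1`, `b, c ≥ 0` and `a + b + c ≥ n − 1` (and `n ≥ 1`), the
underlying graph of the finite quadratic Jaco graph `J_n(f)` with `f(x) = a·x² + b·x + c`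
is the complete graph `K_n`. -/
theorem quadratic_jaco_graph_complete (a b c n : ℕ) (ha : 1 ≤ a) (hn : 1 ≤ n)
    (h : n - 1 ≤ a + b + c) :
    jacoGraph (fun x => a * x ^ 2 + b * x + c) n = (⊤ : SimpleGraph (Fin n)) :=
  quadratic_jaco_graph_complete_general fun _ hi _ => h.trans (add_add_le_quadratic a b c hi)
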